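/- Let E_1, …, E_n, F be Banach spaces, 0 < p < ∞, and let T : E_1 × ⋯ × E_n → F be a p-semi-integral continuous n-linear map. Then for each i ∈ {1, …, n}, the linear operator Ψ_i^{(n)}(T) : E_i → L(E_1, [i], …, E_n; F) is absolutely p-summing, and for every x ∈ E_i the continuous (n−1)-linear map Ψ_i^{(n)}(T)(x) is p-semi-integral. -/

import Mathlib

open MeasureTheory

/-- Weak `ℓ_q` norm of a finite family in a normed space. -/
noncomputable def weakLpNorm (𝕜 : Type*) [RCLike 𝕜] {E : Type*} [NormedAddCommGroup E]
    [NormedSpace 𝕜 E] (q : ℝ) {m : ℕ} (x : Fin m → E) : ℝ :=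
  ⨆ φ : {φ : E →L[𝕜] 𝕜 // ‖φ‖ ≤ 1}, (∑ j, ‖φ.1 (x j)‖ ^ q) ^ (1 / q)

/-- `T` satisfies the `p`-semi-integral inequality with constant `C`, witnessed by a regular
Borel probability measure on the product of the closed dual unit balls with their
weak-star topologies. -/
def SemiIntegralWith (𝕜 : Type*) [RCLike 𝕜] {ι : Type*} [Fintype ι] {E : ι → Type*}
    [∀ i, NormedAddCommGroup (E i)] [∀ i, NormedSpace 𝕜 (E i)]
    {F : Type*} [NormedAddCommGroup F]
    (p C : ℝ) (T : (∀ i, E i) → F) : Prop :=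
  letI : MeasurableSpace (∀ i, {φ : WeakDual 𝕜 (E i) // ∀ z, ‖φ z‖ ≤ ‖z‖}) := borel _
  ∃ μ : Measure (∀ i, {φ : WeakDual 𝕜 (E i) // ∀ z, ‖φ z‖ ≤ ‖z‖}),
    IsProbabilityMeasure μ ∧ μ.Regular ∧
      ∀ x : ∀ i, E i,
        ‖T x‖ ≤ C * (∫ φ, ∏ i, ‖(φ i).1 (x i)‖ ^ p ∂μ) ^ (1 / p)

/-- The `si,p` norm: infimum of admissible constants. -/
noncomputable def siNorm (𝕜 : Type*) [RCLike 𝕜] {ι : Type*} [Fintype ι] {E : ι → Type*}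
    [∀ i, NormedAddCommGroup (E i)] [∀ i, NormedSpace 𝕜 (E i)]
    {F : Type*} [NormedAddCommGroup F]
    (p : ℝ) (T : (∀ i, E i) → F) : ℝ :=
  sInf {C : ℝ | 0 ≤ C ∧ SemiIntegralWith 𝕜 p C T}

/-- `T` is absolutely `(p; q₁,…,qₙ)`-summing with constant `C`. -/
def AbsSummingWith (𝕜 : Type*) [RCLike 𝕜] {ι : Type*} [Fintype ι] {E : ι → Type*}
    [∀ i, NormedAddCommGroup (E i)] [∀ i, NormedSpace 𝕜 (E i)]
    {F : Type*} [NormedAddCommGroup F]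
    (p : ℝ) (q : ι → ℝ) (C : ℝ) (T : (∀ i, E i) → F) : Prop :=
  ∀ (m : ℕ) (x : ∀ i, Fin m → E i),
    (∑ j, ‖T (fun i => x i j)‖ ^ p) ^ (1 / p) ≤ C * ∏ i, weakLpNorm 𝕜 (q i) (x i)

/-- `T` is `p`-dominated with constant `C`, witnessed by regular Borel probability measures
on the closed dual unit balls with their weak-star topologies. -/
def DominatedWith (𝕜 : Type*) [RCLike 𝕜] {ι : Type*} [Fintype ι] {E : ι → Type*}
    [∀ i, NormedAddCommGroup (E i)] [∀ i, NormedSpace 𝕜 (E i)]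
    {F : Type*} [NormedAddCommGroup F]
    (p C : ℝ) (T : (∀ i, E i) → F) : Prop :=
  letI : ∀ i, MeasurableSpace {φ : WeakDual 𝕜 (E i) // ∀ z, ‖φ z‖ ≤ ‖z‖} := fun i => borel _
  ∃ μ : ∀ i, Measure {φ : WeakDual 𝕜 (E i) // ∀ z, ‖φ z‖ ≤ ‖z‖},
    (∀ i, IsProbabilityMeasure (μ i)) ∧ (∀ i, (μ i).Regular) ∧
      ∀ x : ∀ i, E i,
        ‖T x‖ ≤ C * ∏ i, (∫ φ, ‖φ.1 (x i)‖ ^ p ∂(μ i)) ^ (1 / p)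

/-- `E` is an `𝓛_∞`-space. -/
def IsLinftySpace (𝕜 : Type*) [RCLike 𝕜] (E : Type*) [NormedAddCommGroup E]
    [NormedSpace 𝕜 E] : Prop :=
  ∃ lam : ℝ, 1 ≤ lam ∧ ∀ M : Submodule 𝕜 E, FiniteDimensional 𝕜 M →
    ∃ N : Submodule 𝕜 E, M ≤ N ∧ FiniteDimensional 𝕜 N ∧
      ∃ v : N ≃L[𝕜] (Fin (Module.finrank 𝕜 N) → 𝕜),
        ‖(v : N →L[𝕜] (Fin (Module.finrank 𝕜 N) → 𝕜))‖ *
          ‖(v.symm : (Fin (Module.finrank 𝕜 N) → 𝕜) →L[𝕜] N)‖ ≤ lam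

/-- `F` has cotype `q`. -/
def HasCotype (q : ℝ) (F : Type*) [NormedAddCommGroup F] : Prop :=
  ∃ C : ℝ, 0 ≤ C ∧ ∀ (m : ℕ) (x : Fin m → F),
    (∑ j, ‖x j‖ ^ q) ^ (1 / q) ≤
      C * ((∑ ε : Fin m → Bool, ‖∑ j, (if ε j then x j else -x j)‖ ^ (2 : ℝ)) / 2 ^ m)
        ^ ((1 : ℝ) / 2)

/-- Insert the value `x` in coordinate `i`, using `y` in the remaining coordinates. -/
def insertCoord {n : ℕ} (E : Fin n → Type*) (i : Fin n) (x : E i)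
    (y : ∀ j : {j : Fin n // j ≠ i}, E j.1) (j : Fin n) : E j :=
  if h : j = i then cast (congrArg E h).symm x else y ⟨j, h⟩

/-!
In the integrand `∏ k, ‖φ k (x k)‖ ^ p` of the semi-integral inequality, each factor is at most
`‖x k‖ ^ p`, so the factors with index outside any set `s` can be pulled out of the integral as
`∏ k ∉ s, ‖x k‖`. With `s = {i}` the operator `Ψᵢ(T)` satisfies a Pietsch-type domination by the
integral of `‖φ i (x i)‖ ^ p`, and integrating the pointwise weak-`ℓ_p` bound makes it absolutely
`p`-summing. With `s = {i}ᶜ` the image of the measure under the projection forgetting the `i`-th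
functional witnesses that `Ψᵢ(T)(x)` is `p`-semi-integral.
-/

section DualBall

variable {𝕜 : Type*} [RCLike 𝕜]

/-- The closed unit ball of the dual of `E` with the weak-star topology, encoded exactly as the
factors of the product space in `SemiIntegralWith`; it is reducible so that measures on the two
agree syntactically. -/
abbrev DualBall (𝕜 : Type*) [RCLike 𝕜] (E : Type*) [NormedAddCommGroup E] [NormedSpace 𝕜 E] :=
  {φ : WeakDual 𝕜 E // ∀ z, ‖φ z‖ ≤ ‖z‖}

lemma norm_toStrongDual_le_one_iff {E : Type*} [NormedAddCommGroup E] [NormedSpace 𝕜 E]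
    {φ : WeakDual 𝕜 E} : ‖WeakDual.toStrongDual φ‖ ≤ 1 ↔ ∀ z, ‖φ z‖ ≤ ‖z‖ := by
  simp only [ContinuousLinearMap.opNorm_le_iff zero_le_one, one_mul, WeakDual.toStrongDual_apply]

instance DualBall.compactSpace (E : Type*) [NormedAddCommGroup E] [NormedSpace 𝕜 E] :
    CompactSpace (DualBall 𝕜 E) := by
  refine isCompact_iff_compactSpace (s := {φ : WeakDual 𝕜 E | ∀ z, ‖φ z‖ ≤ ‖z‖}).mp ?_
  convert! WeakDual.isCompact_closedBall (𝕜 := 𝕜) (E := E) 0 1 using 1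
  ext φ
  simp only [Set.mem_ofPred_eq, Set.mem_preimage, mem_closedBall_zero_iff,
    norm_toStrongDual_le_one_iff]

variable {ι : Type*} {E : ι → Type*} [∀ k, NormedAddCommGroup (E k)] [∀ k, NormedSpace 𝕜 (E k)]
  {p : ℝ}

lemma DualBall.continuous_prod_norm_rpow (hp : 0 ≤ p) (s : Finset ι) (x : ∀ k, E k) :
    Continuous fun φ : ∀ k, DualBall 𝕜 (E k) => ∏ k ∈ s, ‖(φ k).1 (x k)‖ ^ p := by
  refine continuous_finsetProd _ fun k _ => Continuous.rpow_const ?_ fun _ => Or.inr hp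
  exact ((WeakDual.eval_continuous (x k)).comp
    (continuous_subtype_val.comp (continuous_apply k))).norm

lemma DualBall.integrable_prod_norm_rpow [MeasurableSpace (∀ k, DualBall 𝕜 (E k))]
    [BorelSpace (∀ k, DualBall 𝕜 (E k))] (μ : Measure (∀ k, DualBall 𝕜 (E k)))
    [IsFiniteMeasureOnCompacts μ] (hp : 0 ≤ p) (s : Finset ι) (x : ∀ k, E k) :
    Integrable (fun φ => ∏ k ∈ s, ‖(φ k).1 (x k)‖ ^ p) μ :=
  (continuous_prod_norm_rpow hp s x).integrable_of_hasCompactSupport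
    (HasCompactSupport.of_compactSpace _)

end DualBall

section WeakLpNorm

variable {𝕜 : Type*} [RCLike 𝕜] {E : Type*} [NormedAddCommGroup E] [NormedSpace 𝕜 E] {p : ℝ}
  {m : ℕ}

lemma weakLpNorm_nonneg (q : ℝ) (x : Fin m → E) : 0 ≤ weakLpNorm 𝕜 q x :=
  Real.iSup_nonneg fun _ => by positivity

lemma rpow_sum_norm_rpow_le_weakLpNorm (hp : 0 ≤ p) (x : Fin m → E) {φ : E →L[𝕜] 𝕜}
    (hφ : ‖φ‖ ≤ 1) : (∑ j, ‖φ (x j)‖ ^ p) ^ (1 / p) ≤ weakLpNorm 𝕜 p x := by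
  refine le_ciSup (f := fun φ : {φ : E →L[𝕜] 𝕜 // ‖φ‖ ≤ 1} =>
    (∑ j, ‖φ.1 (x j)‖ ^ p) ^ (1 / p)) ⟨(∑ j, ‖x j‖ ^ p) ^ (1 / p), ?_⟩ ⟨φ, hφ⟩
  rintro _ ⟨ψ, rfl⟩
  dsimp only
  gcongr with j
  exact (ψ.1.le_of_opNorm_le ψ.2 (x j)).trans_eq (one_mul _)

lemma DualBall.sum_norm_rpow_le_weakLpNorm_rpow (hp : 0 < p) (x : Fin m → E)
    (φ : DualBall 𝕜 E) : ∑ j, ‖φ.1 (x j)‖ ^ p ≤ weakLpNorm 𝕜 p x ^ p := by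
  rw [← Real.rpow_inv_le_iff_of_pos (by positivity) (weakLpNorm_nonneg p x) hp, ← one_div]
  exact rpow_sum_norm_rpow_le_weakLpNorm hp.le x (norm_toStrongDual_le_one_iff.mpr φ.2)

lemma rpow_sum_rpow_le_mul_weakLpNorm_of_le_integral {Ω : Type*} [MeasurableSpace Ω]
    {μ : Measure Ω} [IsProbabilityMeasure μ] {ψ : Ω → DualBall 𝕜 E} (hp : 0 < p)
    {C : ℝ} (hC : 0 ≤ C) (x : Fin m → E)
    (hψ : ∀ j, Integrable (fun ω => ‖(ψ ω).1 (x j)‖ ^ p) μ) {a : Fin m → ℝ} (ha : ∀ j, 0 ≤ a j)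
    (hle : ∀ j, a j ≤ C * (∫ ω, ‖(ψ ω).1 (x j)‖ ^ p ∂μ) ^ (1 / p)) :
    (∑ j, a j ^ p) ^ (1 / p) ≤ C * weakLpNorm 𝕜 p x := by
  have hw : 0 ≤ weakLpNorm 𝕜 p x := weakLpNorm_nonneg p x
  have hterm (j : Fin m) : a j ^ p ≤ C ^ p * ∫ ω, ‖(ψ ω).1 (x j)‖ ^ p ∂μ := by
    have hI : 0 ≤ ∫ ω, ‖(ψ ω).1 (x j)‖ ^ p ∂μ := integral_nonneg fun ω => by positivity
    calc a j ^ p ≤ (C * (∫ ω, ‖(ψ ω).1 (x j)‖ ^ p ∂μ) ^ (1 / p)) ^ p :=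
          Real.rpow_le_rpow (ha j) (hle j) hp.le
      _ = C ^ p * ∫ ω, ‖(ψ ω).1 (x j)‖ ^ p ∂μ := by
          rw [Real.mul_rpow hC (by positivity), one_div, Real.rpow_inv_rpow hI hp.ne']
  have hintegral : ∫ ω, ∑ j, ‖(ψ ω).1 (x j)‖ ^ p ∂μ ≤ weakLpNorm 𝕜 p x ^ p := by
    simpa using integral_mono (integrable_finsetSum _ fun j _ => hψ j)
      (integrable_const (weakLpNorm 𝕜 p x ^ p))
      fun ω => (ψ ω).sum_norm_rpow_le_weakLpNorm_rpow hp x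
  have ha_sum : 0 ≤ ∑ j, a j ^ p := Finset.sum_nonneg fun j _ => Real.rpow_nonneg (ha j) p
  rw [one_div, Real.rpow_inv_le_iff_of_pos ha_sum (by positivity) hp]
  calc ∑ j, a j ^ p ≤ ∑ j, C ^ p * ∫ ω, ‖(ψ ω).1 (x j)‖ ^ p ∂μ :=
        Finset.sum_le_sum fun j _ => hterm j
    _ = C ^ p * ∫ ω, ∑ j, ‖(ψ ω).1 (x j)‖ ^ p ∂μ := by
        rw [← Finset.mul_sum, integral_finsetSum _ fun j _ => hψ j]
    _ ≤ C ^ p * weakLpNorm 𝕜 p x ^ p := by gcongr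
    _ = (C * weakLpNorm 𝕜 p x) ^ p := (Real.mul_rpow hC hw).symm

end WeakLpNorm

lemma regular_map_of_continuous {K L : Type*} [TopologicalSpace K] [MeasurableSpace K]
    [BorelSpace K] [TopologicalSpace L] [R1Space L] [MeasurableSpace L] [BorelSpace L]
    (μ : Measure K) [IsFiniteMeasure μ] [μ.InnerRegularCompactLTTop] {f : K → L}
    (hf : Continuous f) : (μ.map f).Regular := by
  have : (μ.map f).InnerRegularCompactLTTop :=
    Measure.InnerRegularCompactLTTop.map_of_continuous hf
  infer_instance

lemma rpow_integral_mul_le {Ω : Type*} [MeasurableSpace Ω] {μ : Measure Ω} {f g : Ω → ℝ}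
    {a p : ℝ} (hp : 0 < p) (ha : 0 ≤ a) (hf : ∀ ω, 0 ≤ f ω) (hfa : ∀ ω, f ω ≤ a ^ p)
    (hg : ∀ ω, 0 ≤ g ω) (hg_int : Integrable g μ) :
    (∫ ω, f ω * g ω ∂μ) ^ (1 / p) ≤ a * (∫ ω, g ω ∂μ) ^ (1 / p) := by
  have hfg (ω : Ω) : 0 ≤ f ω * g ω := mul_nonneg (hf ω) (hg ω)
  calc (∫ ω, f ω * g ω ∂μ) ^ (1 / p) ≤ (∫ ω, a ^ p * g ω ∂μ) ^ (1 / p) := by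
        refine Real.rpow_le_rpow (integral_nonneg hfg) ?_ (by positivity)
        exact integral_mono_of_nonneg (.of_forall hfg) (hg_int.const_mul _)
          (.of_forall fun ω => mul_le_mul_of_nonneg_right (hfa ω) (hg ω))
    _ = a * (∫ ω, g ω ∂μ) ^ (1 / p) := by
        rw [integral_const_mul, Real.mul_rpow (by positivity) (integral_nonneg hg), one_div,
          Real.rpow_rpow_inv ha hp.ne']

section SemiIntegral

variable {𝕜 : Type*} [RCLike 𝕜] {ι : Type*} [Fintype ι] [DecidableEq ι] {E : ι → Type*}
  [∀ k, NormedAddCommGroup (E k)] [∀ k, NormedSpace 𝕜 (E k)] {p C : ℝ}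

lemma DualBall.rpow_integral_prod_le [MeasurableSpace (∀ k, DualBall 𝕜 (E k))]
    [BorelSpace (∀ k, DualBall 𝕜 (E k))] (μ : Measure (∀ k, DualBall 𝕜 (E k)))
    [IsFiniteMeasureOnCompacts μ] (hp : 0 < p) (s : Finset ι) (x : ∀ k, E k) :
    (∫ φ, ∏ k, ‖(φ k).1 (x k)‖ ^ p ∂μ) ^ (1 / p) ≤
      (∏ k ∈ sᶜ, ‖x k‖) * (∫ φ, ∏ k ∈ s, ‖(φ k).1 (x k)‖ ^ p ∂μ) ^ (1 / p) := by
  simp only [← Finset.prod_compl_mul_prod s]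
  refine rpow_integral_mul_le hp (by positivity) (fun φ => by positivity) (fun φ => ?_)
    (fun φ => by positivity) (integrable_prod_norm_rpow μ hp.le s x)
  rw [← Real.finsetProd_rpow _ _ fun k _ => norm_nonneg (x k)]
  gcongr with k
  exact (φ k).2 (x k)

variable {F : Type*} [NormedAddCommGroup F] {T : (∀ k, E k) → F}

lemma SemiIntegralWith.rpow_sum_iSup_norm_rpow_le (hp : 0 < p) (hC : 0 ≤ C)
    (hT : SemiIntegralWith 𝕜 p C T) (i : ι) {m : ℕ} (x : Fin m → E i) :
    (∑ j, (⨆ y : ∀ k : {k // k ≠ i}, {z : E k.1 // ‖z‖ ≤ 1},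
        ‖T ((Equiv.piSplitAt i E).symm (x j, fun k => (y k).1))‖) ^ p) ^ (1 / p)
      ≤ C * weakLpNorm 𝕜 p x := by
  let _ : MeasurableSpace (∀ k, DualBall 𝕜 (E k)) := borel _
  have : BorelSpace (∀ k, DualBall 𝕜 (E k)) := ⟨rfl⟩
  obtain ⟨μ, hμ, -, hle⟩ := hT
  have hint (z : E i) : Integrable (fun φ : ∀ k, DualBall 𝕜 (E k) => ‖(φ i).1 z‖ ^ p) μ := by
    simpa using DualBall.integrable_prod_norm_rpow μ hp.le {i} (Function.update 0 i z)
  refine rpow_sum_rpow_le_mul_weakLpNorm_of_le_integral hp hC x (fun j => hint (x j))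
    (fun j => Real.iSup_nonneg fun _ => norm_nonneg _) fun j => ?_
  refine Real.iSup_le (fun y => ?_) (by positivity)
  set z := (Equiv.piSplitAt i E).symm (x j, fun k => (y k).1) with hz
  have hzi : z i = x j := by simp [hz]
  have hz_prod : ∏ k ∈ {i}ᶜ, ‖z k‖ ≤ 1 := by
    refine Finset.prod_le_one (fun k _ => norm_nonneg _) fun k hk => ?_
    have hki : k ≠ i := by simpa using hk
    simpa [hz, hki] using (y ⟨k, hki⟩).2
  calc ‖T z‖ ≤ C * (∫ φ, ∏ k, ‖(φ k).1 (z k)‖ ^ p ∂μ) ^ (1 / p) := hle z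
    _ ≤ C * ((∏ k ∈ {i}ᶜ, ‖z k‖) * (∫ φ, ∏ k ∈ {i}, ‖(φ k).1 (z k)‖ ^ p ∂μ) ^ (1 / p)) := by
        gcongr
        exact DualBall.rpow_integral_prod_le μ hp {i} z
    _ ≤ C * (∫ φ, ‖(φ i).1 (x j)‖ ^ p ∂μ) ^ (1 / p) := by
        simp only [Finset.prod_singleton, hzi]
        gcongr
        exact mul_le_of_le_one_left (by positivity) hz_prod

lemma SemiIntegralWith.piSplitAt_symm (hp : 0 < p) (hC : 0 ≤ C)
    (hT : SemiIntegralWith 𝕜 p C T) (i : ι) (x : E i) :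
    SemiIntegralWith 𝕜 p (C * ‖x‖) fun y : ∀ k : {k // k ≠ i}, E k =>
      T ((Equiv.piSplitAt i E).symm (x, y)) := by
  let _ : MeasurableSpace (∀ k, DualBall 𝕜 (E k)) := borel _
  have : BorelSpace (∀ k, DualBall 𝕜 (E k)) := ⟨rfl⟩
  let _ : MeasurableSpace (∀ k : {k // k ≠ i}, DualBall 𝕜 (E k)) := borel _
  have : BorelSpace (∀ k : {k // k ≠ i}, DualBall 𝕜 (E k)) := ⟨rfl⟩
  obtain ⟨μ, hμ, hreg, hle⟩ := hT
  let π : (∀ k, DualBall 𝕜 (E k)) → ∀ k : {k // k ≠ i}, DualBall 𝕜 (E k) := fun φ k => φ k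
  have hπ : Continuous π := continuous_pi fun k => continuous_apply k.1
  refine ⟨μ.map π, Measure.isProbabilityMeasure_map hπ.aemeasurable,
    regular_map_of_continuous μ hπ, fun y => ?_⟩
  set z := (Equiv.piSplitAt i E).symm (x, y) with hz
  have hzi : z i = x := by simp [hz]
  have hz_prod (φ : ∀ k, DualBall 𝕜 (E k)) :
      ∏ k ∈ {i}ᶜ, ‖(φ k).1 (z k)‖ ^ p = ∏ k, ‖(π φ k).1 (y k)‖ ^ p := by
    rw [Finset.prod_subtype _ (p := (· ≠ i)) (by simp)]
    exact Finset.prod_congr rfl fun k _ => by simp [hz, π, k.2]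
  calc ‖T z‖ ≤ C * (∫ φ, ∏ k, ‖(φ k).1 (z k)‖ ^ p ∂μ) ^ (1 / p) := hle z
    _ ≤ C * (‖x‖ * (∫ φ, ∏ k ∈ {i}ᶜ, ‖(φ k).1 (z k)‖ ^ p ∂μ) ^ (1 / p)) := by
        gcongr
        simpa [hzi] using DualBall.rpow_integral_prod_le μ hp {i}ᶜ z
    _ = C * ‖x‖ * (∫ φ, ∏ k, ‖(π φ k).1 (y k)‖ ^ p ∂μ) ^ (1 / p) := by
        simp only [hz_prod, mul_assoc]
    _ = C * ‖x‖ * (∫ φ, ∏ k, ‖(φ k).1 (y k)‖ ^ p ∂(μ.map π)) ^ (1 / p) := by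
        rw [integral_map hπ.aemeasurable (DualBall.continuous_prod_norm_rpow
          (E := fun k : {k // k ≠ i} => E k) hp.le Finset.univ y).aestronglyMeasurable]

theorem semiIntegral_psi_general (hp : 0 < p) (hC : 0 ≤ C) (hT : SemiIntegralWith 𝕜 p C T)
    (i : ι) :
    (∀ (m : ℕ) (x : Fin m → E i),
      (∑ j, (⨆ y : ∀ k : {k // k ≠ i}, {z : E k.1 // ‖z‖ ≤ 1},
          ‖T ((Equiv.piSplitAt i E).symm (x j, fun k => (y k).1))‖) ^ p) ^ (1 / p)
        ≤ C * weakLpNorm 𝕜 p x) ∧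
    ∀ x : E i, SemiIntegralWith 𝕜 p (C * ‖x‖) fun y : ∀ k : {k // k ≠ i}, E k =>
      T ((Equiv.piSplitAt i E).symm (x, y)) :=
  ⟨fun _ x => hT.rpow_sum_iSup_norm_rpow_le hp hC i x, fun x => hT.piSplitAt_symm hp hC i x⟩

end SemiIntegral

lemma insertCoord_eq_piSplitAt_symm {n : ℕ} (E : Fin n → Type*) (i : Fin n) (x : E i)
    (y : ∀ k : {k : Fin n // k ≠ i}, E k.1) :
    insertCoord E i x y = (Equiv.piSplitAt i E).symm (x, y) := by
  ext k
  obtain rfl | hk := eq_or_ne k i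
  · simp [insertCoord]
  · simp [insertCoord, hk]

/-- If `T` is `p`-semi-integral, then for each coordinate `i` the canonical
linear operator `Ψᵢ(T) : Eᵢ → L(E₁,[i],…,Eₙ;F)` is absolutely `p`-summing (the norm of
`Ψᵢ(T)(x)` being the sup over the product of the closed unit balls of the remaining
coordinates), and `Ψᵢ(T)(x)` is `p`-semi-integral for every `x ∈ Eᵢ`. -/
theorem semiIntegral_psi {𝕜 : Type*} [RCLike 𝕜] {n : ℕ} (hn : 1 ≤ n)
    {E : Fin n → Type*} [∀ i, NormedAddCommGroup (E i)] [∀ i, NormedSpace 𝕜 (E i)]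
    [∀ i, CompleteSpace (E i)]
    {F : Type*} [NormedAddCommGroup F] [NormedSpace 𝕜 F] [CompleteSpace F]
    {p : ℝ} (hp : 0 < p) (T : ContinuousMultilinearMap 𝕜 E F)
    (hT : ∃ C, 0 ≤ C ∧ SemiIntegralWith 𝕜 p C ⇑T) (i : Fin n) :
    (∃ C, 0 ≤ C ∧ ∀ (m : ℕ) (x : Fin m → E i),
      (∑ j, (⨆ y : ∀ k : {k : Fin n // k ≠ i}, {z : E k.1 // ‖z‖ ≤ 1},
          ‖T (insertCoord E i (x j) (fun k => (y k).1))‖) ^ p) ^ (1 / p)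
        ≤ C * weakLpNorm 𝕜 p x) ∧
    ∀ x : E i, ∃ C, 0 ≤ C ∧
      SemiIntegralWith 𝕜 p C (fun y : ∀ j : {j : Fin n // j ≠ i}, E j.1 =>
        T (insertCoord E i x y)) := by
  obtain ⟨C, hC, hT⟩ := hT
  obtain ⟨hsum, hsemi⟩ := semiIntegral_psi_general hp hC hT i
  simp only [insertCoord_eq_piSplitAt_symm]
  exact ⟨⟨C, hC, hsum⟩, fun x => ⟨C * ‖x‖, by positivity, hsemi x⟩⟩
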